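/- Let (X, Σ, μ) be a subprobability space and let P = {P_i}_{i=1}^{∞} be a partition of X with h(μ; P) < ∞ such that μ(P_1) = max{μ(P_i) : i ∈ ℕ}. Let Q be a measurable set with P_1 ⊆ Q, and for k ∈ ℕ set Q_k = ⋃_{i=1}^{k} (P_i ∩ Q). Then for every k ∈ ℕ: sh(μ(Q_k)) + Σ_{i≥2} sh(μ(P_i ∖ Q_k)) ≥ sh(μ(Q_{k+1})) + Σ_{i≥2} sh(μ(P_i ∖ Q_{k+1})); that is, h(μ; {Q_k} ∪ P_{X∖Q_k}) ≥ h(μ; {Q_{k+1}} ∪ P_{X∖Q_{k+1}}). -/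

import Mathlib

open MeasureTheory ENNReal Filter

/-- The Shannon function `sh x = -x * log₂ x` (with `sh 0 = 0`, since `log 0 = 0`). -/
noncomputable def sh (x : ℝ) : ℝ := -x * Real.logb 2 x

/-- A (countable, ℕ-indexed) partition of `X` w.r.t. the measure `μ`:
measurable, pairwise disjoint sets whose union has null complement. -/
def IsPartition {X : Type*} [MeasurableSpace X] (μ : Measure X) (P : ℕ → Set X) : Prop :=
  (∀ i, MeasurableSet (P i)) ∧ Pairwise (Function.onFun Disjoint P) ∧
    μ (Set.univ \ ⋃ i, P i) = 0

/-- The entropy `h(μ; P) = Σ_i sh(μ(P_i)) ∈ [0,∞]` of a countable family of sets. -/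
noncomputable def partEntropy {X : Type*} [MeasurableSpace X]
    (μ : Measure X) (P : ℕ → Set X) : ℝ≥0∞ :=
  ∑' i, ENNReal.ofReal (sh ((μ (P i)).toReal))

/-- An error-control family: a family of measurable sets covering `X`. -/
def IsErrorControl {X : Type*} [MeasurableSpace X] (𝒬 : Set (Set X)) : Prop :=
  (∀ Q ∈ 𝒬, MeasurableSet Q) ∧ ⋃₀ 𝒬 = Set.univ

/-- `P` is `𝒬`-acceptable: every element of `P` is contained in some member of `𝒬`. -/
def Acceptable {X : Type*} (𝒬 : Set (Set X)) (P : ℕ → Set X) : Prop :=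
  ∀ i, ∃ Q ∈ 𝒬, P i ⊆ Q

/-- The entropy `H(μ; 𝒬)`: the infimum of entropies of `𝒬`-acceptable partitions
(`= ∞` if there is none). -/
noncomputable def coverEntropy {X : Type*} [MeasurableSpace X]
    (μ : Measure X) (𝒬 : Set (Set X)) : ℝ≥0∞ :=
  ⨅ (P : ℕ → Set X) (_ : IsPartition μ P) (_ : Acceptable 𝒬 P), partEntropy μ P

/-!
Passing from `Q_k` to `Q_{k+1}` moves the piece `P_{k+1} ∩ Q` out of the cell `P_{k+1}` and into
`Q_k`, which contains the largest cell `P_0`, and leaves every other cell unchanged. So mass moves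
from a smaller cell to a larger one: the two new masses have the same sum as the two old ones and
enclose them, and for a concave function `f` the sum of two values at points with a fixed sum
decreases as the points move apart.
-/

theorem add_le_add_of_concaveOn_of_mem_segment {𝕜 E β : Type*} [Semiring 𝕜] [PartialOrder 𝕜]
    [AddCommGroup E] [Module 𝕜 E] [AddCommMonoid β] [PartialOrder β] [IsOrderedAddMonoid β]
    [Module 𝕜 β] {s : Set E} {f : E → β} (hf : ConcaveOn 𝕜 s f) {x y u v : E} (hx : x ∈ s)
    (hy : y ∈ s) (hu : u ∈ segment 𝕜 x y) (hsum : u + v = x + y) :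
    f x + f y ≤ f u + f v := by
  obtain ⟨a, b, ha, hb, hab, rfl⟩ := hu
  have hv : v = b • x + a • y := by
    have hxy : x + y = (a + b) • x + (a + b) • y := by rw [hab, one_smul, one_smul]
    rw [hxy, add_smul, add_smul] at hsum
    exact add_left_cancel (hsum.trans (by abel))
  calc
    f x + f y = (a + b) • f x + (a + b) • f y := by rw [hab, one_smul, one_smul]
    _ = (a • f x + b • f y) + (b • f x + a • f y) := by rw [add_smul, add_smul]; abel
    _ ≤ f (a • x + b • y) + f v :=
      add_le_add (hf.2 hx hy ha hb hab) (hv ▸ hf.2 hx hy hb ha ((add_comm b a).trans hab))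

theorem sh_eq_smul_negMulLog : sh = (Real.log 2)⁻¹ • Real.negMulLog := by
  ext x
  simp only [sh, Real.negMulLog, Real.logb, Pi.smul_apply, smul_eq_mul]
  ring

theorem sh_nonneg {x : ℝ} (hx : x ∈ Set.Icc (0 : ℝ) 1) : 0 ≤ sh x := by
  rw [sh_eq_smul_negMulLog]
  exact smul_nonneg (inv_nonneg.2 (Real.log_nonneg one_le_two)) (Real.negMulLog_nonneg hx.1 hx.2)

theorem concaveOn_sh : ConcaveOn ℝ (Set.Ici 0) sh := by
  rw [sh_eq_smul_negMulLog]
  exact Real.concaveOn_negMulLog.smul (inv_nonneg.2 (Real.log_nonneg one_le_two))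

section FiniteMeasure

variable {X : Type*} [MeasurableSpace X]

/-- The entropy `h(μ; {A} ∪ R_{X∖A})` of the family obtained from `R` by extracting the set `A`,
with an arbitrary function `f` in place of the Shannon function. Negative values of `f` are
truncated to `0`. -/
noncomputable def extractionEntropy {ι : Type*} (f : ℝ → ℝ) (μ : Measure X) (A : Set X)
    (R : ι → Set X) : ℝ≥0∞ :=
  ENNReal.ofReal (f (μ.real A)) + ∑' i, ENNReal.ofReal (f (μ.real (R i \ A)))

variable {μ : Measure X} [IsFiniteMeasure μ]

theorem measureReal_mem_Icc (s : Set X) : μ.real s ∈ Set.Icc 0 (μ.real Set.univ) :=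
  ⟨measureReal_nonneg, measureReal_mono s.subset_univ⟩

theorem comp_measureReal_union_add_sdiff_le {f : ℝ → ℝ}
    (hf : ConcaveOn ℝ (Set.Icc 0 (μ.real Set.univ)) f) {A B C : Set X}
    (hC : MeasurableSet C) (hAB : Disjoint A B) (hCB : C ⊆ B) (hBA : μ.real B ≤ μ.real A) :
    f (μ.real (A ∪ C)) + f (μ.real (B \ C)) ≤ f (μ.real A) + f (μ.real B) := by
  have hunion : μ.real (A ∪ C) = μ.real A + μ.real C :=
    measureReal_union (hAB.mono_right hCB) hC
  have hsplit : μ.real C + μ.real (B \ C) = μ.real B := by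
    simpa only [Set.inter_eq_right.2 hCB] using measureReal_inter_add_sdiff (μ := μ) (s := B) hC
  have hC0 : 0 ≤ μ.real C := measureReal_nonneg
  have hmem : μ.real A ∈ segment ℝ (μ.real (A ∪ C)) (μ.real (B \ C)) := by
    rw [segment_symm, segment_eq_Icc (by linarith)]
    constructor <;> linarith
  exact add_le_add_of_concaveOn_of_mem_segment hf (measureReal_mem_Icc _) (measureReal_mem_Icc _)
    hmem (by linarith)

theorem extractionEntropy_union_le {f : ℝ → ℝ}
    (hf : ConcaveOn ℝ (Set.Icc 0 (μ.real Set.univ)) f)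
    (hf0 : ∀ x ∈ Set.Icc 0 (μ.real Set.univ), 0 ≤ f x) {ι : Type*} {R : ι → Set X}
    (hR : Pairwise (Function.onFun Disjoint R)) {A C : Set X} (hC : MeasurableSet C) {j : ι}
    (hCR : C ⊆ R j \ A) (hRA : μ.real (R j \ A) ≤ μ.real A) :
    extractionEntropy f μ (A ∪ C) R ≤ extractionEntropy f μ A R := by
  classical
  have hne : ∀ i, i ≠ j → R i \ (A ∪ C) = R i \ A := fun i hi ↦ by
    have hdisj : Disjoint (R i \ A) C :=
      (hR hi).mono Set.sdiff_subset (hCR.trans Set.sdiff_subset)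
    rw [← Set.sdiff_sdiff, hdisj.sdiff_eq_left]
  have hpair : ENNReal.ofReal (f (μ.real (A ∪ C))) + ENNReal.ofReal (f (μ.real (R j \ (A ∪ C)))) ≤
      ENNReal.ofReal (f (μ.real A)) + ENNReal.ofReal (f (μ.real (R j \ A))) := by
    have hnonneg (s : Set X) : 0 ≤ f (μ.real s) := hf0 _ (measureReal_mem_Icc s)
    rw [← ENNReal.ofReal_add (hnonneg _) (hnonneg _), ← ENNReal.ofReal_add (hnonneg _) (hnonneg _),
      ← Set.sdiff_sdiff]
    exact ENNReal.ofReal_le_ofReal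
      (comp_measureReal_union_add_sdiff_le hf hC Set.disjoint_sdiff_right hCR hRA)
  simp only [extractionEntropy]
  rw [ENNReal.tsum_eq_add_tsum_ite j,
    ENNReal.tsum_eq_add_tsum_ite (f := fun i ↦ ENNReal.ofReal (f (μ.real (R i \ A)))) j,
    ← add_assoc, ← add_assoc]
  refine add_le_add hpair (ENNReal.tsum_le_tsum fun i ↦ ?_)
  split_ifs with hi
  · exact le_rfl
  · rw [hne i hi]

theorem stmt_8_general {f : ℝ → ℝ} (hf : ConcaveOn ℝ (Set.Icc 0 (μ.real Set.univ)) f)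
    (hf0 : ∀ x ∈ Set.Icc 0 (μ.real Set.univ), 0 ≤ f x) {P : ℕ → Set X}
    (hPm : ∀ i, MeasurableSet (P i)) (hPd : Pairwise (Function.onFun Disjoint P))
    (hmax : ∀ i, μ (P i) ≤ μ (P 0)) {Q : Set X} (hQ : MeasurableSet Q) (hsub : P 0 ⊆ Q) :
    Antitone fun k : ℕ ↦ extractionEntropy f μ (⋃ i ∈ Finset.range (k + 1), P i ∩ Q)
      fun i ↦ P (i + 1) := by
  refine antitone_nat_of_succ_le fun k ↦ ?_
  rw [Finset.range_add_one (n := k + 1), Finset.set_biUnion_insert, Set.union_comm]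
  set A : Set X := ⋃ i ∈ Finset.range (k + 1), P i ∩ Q
  have hdisj : Disjoint (P (k + 1)) A := by
    refine Set.disjoint_iUnion₂_right.2 fun i hi ↦ (hPd ?_).mono_right Set.inter_subset_left
    exact (Finset.mem_range.1 hi).ne'
  have hP0 : P 0 ⊆ A := (Set.subset_inter subset_rfl hsub).trans
    (Set.subset_biUnion_of_mem (u := fun i ↦ P i ∩ Q) (Finset.mem_range.2 k.succ_pos))
  refine extractionEntropy_union_le hf hf0 (hPd.comp_of_injective (add_left_injective 1))
    ((hPm _).inter hQ) (j := k) ?_ ?_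
  · exact Set.subset_sdiff.2 ⟨Set.inter_subset_left, hdisj.mono_left Set.inter_subset_left⟩
  · rw [hdisj.sdiff_eq_left]
    exact ENNReal.toReal_mono (measure_ne_top _ _) ((hmax _).trans (measure_mono hP0))

end FiniteMeasure

/-- Step (12) of Lemma II.1: with `P 0` of maximal measure, `P 0 ⊆ Q`, and
`Q_k = ⋃_{i ≤ k} (P i ∩ Q)`, the entropy of `{Q_k} ∪ P_{X∖Q_k}` is nonincreasing in `k`:
`sh(μ Q_k) + Σ_{i≥1} sh(μ(P i ∖ Q_k)) ≥ sh(μ Q_{k+1}) + Σ_{i≥1} sh(μ(P i ∖ Q_{k+1}))`. -/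
theorem stmt_8 {X : Type*} [MeasurableSpace X] (μ : Measure X) (hμ : μ Set.univ ≤ 1)
    (P : ℕ → Set X) (hP : IsPartition μ P) (hfin : partEntropy μ P ≠ ⊤)
    (hmax : ∀ i, μ (P i) ≤ μ (P 0))
    (Q : Set X) (hQ : MeasurableSet Q) (hsub : P 0 ⊆ Q) (k : ℕ) :
    ENNReal.ofReal (sh ((μ (⋃ i ∈ Finset.range (k + 2), P i ∩ Q)).toReal)) +
        ∑' i, ENNReal.ofReal
          (sh ((μ (P (i + 1) \ ⋃ j ∈ Finset.range (k + 2), P j ∩ Q)).toReal)) ≤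
      ENNReal.ofReal (sh ((μ (⋃ i ∈ Finset.range (k + 1), P i ∩ Q)).toReal)) +
        ∑' i, ENNReal.ofReal
          (sh ((μ (P (i + 1) \ ⋃ j ∈ Finset.range (k + 1), P j ∩ Q)).toReal)) := by
  have : IsFiniteMeasure μ := ⟨hμ.trans_lt one_lt_top⟩
  have hμ1 : μ.real Set.univ ≤ 1 := toReal_mono one_ne_top hμ
  exact stmt_8_general (concaveOn_sh.subset Set.Icc_subset_Ici_self (convex_Icc _ _))
    (fun x hx ↦ sh_nonneg ⟨hx.1, hx.2.trans hμ1⟩) hP.1 hP.2.1 hmax hQ hsub k.le_succ
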